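/- For k = 2, the general determinant identity reduces to Ramanujan's modulus 5 identity: with A₁(q) = 11/60 + ∑_{n≡±2 mod 5} nq^n/(1-q^n) and A₂(q) = -1/60 + ∑_{n≡±1 mod 5} nq^n/(1-q^n), one has A₂(q) - A₁(q) = (-1/5)·(q;q)_∞⁵/(q⁵;q⁵)_∞. -/

import Mathlib

open scoped BigOperators

open Filter Topology

/-- The `q`-Pochhammer symbol `(a; q)_∞`. -/
noncomputable def qPoch (q a : ℂ) : ℂ := ∏' n : ℕ, (1 - a * q ^ n)

/-- The multiplicative theta function `(a; q)_∞ (q / a; q)_∞`. -/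
noncomputable def qTheta (q a : ℂ) : ℂ := qPoch q a * qPoch q (q / a)

/-- The function `x / (1 - x) ^ 2`. -/
noncomputable def koebe (x : ℂ) : ℂ := x / (1 - x) ^ 2

/-- One half of the sum defining the multiplicative Weierstrass function. -/
noncomputable def halfSum (q x : ℂ) : ℂ := ∑' n : ℕ, koebe (x * q ^ n)

/-- The multiplicative analogue of the Weierstrass `℘`-function, up to a constant. -/
noncomputable def bilateralSum (q a : ℂ) : ℂ := ∑' n : ℤ, koebe (a * q ^ n)

lemma summable_norm_mul_pow {q : ℂ} (hq : ‖q‖ < 1) (a : ℂ) :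
    Summable fun n : ℕ => ‖-(a * q ^ n)‖ := by
  simp only [norm_neg, norm_mul, norm_pow]
  exact (summable_geometric_of_lt_one (norm_nonneg _) hq).mul_left _

lemma multipliable_qPoch {q : ℂ} (hq : ‖q‖ < 1) (a : ℂ) :
    Multipliable fun n : ℕ => (1 - a * q ^ n) := by
  simpa [sub_eq_add_neg] using multipliable_one_add_of_summable (summable_norm_mul_pow hq a)

lemma qPoch_eq {q : ℂ} (hq : ‖q‖ < 1) (a : ℂ) : qPoch q a = (1 - a) * qPoch q (q * a) := by
  have e : ∀ n : ℕ, 1 - a * q ^ (n + 1) = 1 - q * a * q ^ n := fun n => by ring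
  have h : Multipliable fun n : ℕ => (1 - a * q ^ (n + 1)) := by
    simpa only [e] using multipliable_qPoch hq (q * a)
  have h2 := tprod_eq_zero_mul' (f := fun n : ℕ => 1 - a * q ^ n) h
  rw [qPoch, h2, tprod_congr e, pow_zero, mul_one, qPoch]

lemma qPoch_ne_zero {q a : ℂ} (hq : ‖q‖ < 1) (ha : ‖a‖ < 1) : qPoch q a ≠ 0 := by
  have := tprod_one_add_ne_zero_of_summable (f := fun n : ℕ => -(a * q ^ n)) (fun n h => ?_)
    (summable_norm_mul_pow hq a)
  · simpa [qPoch, sub_eq_add_neg] using this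
  · have h1 : a * q ^ n = 1 := by linear_combination -h
    have h2 : ‖a‖ * ‖q‖ ^ n = 1 := by rw [← norm_pow, ← norm_mul, h1, norm_one]
    have := pow_le_one₀ (n := n) (norm_nonneg q) hq.le
    nlinarith [norm_nonneg a]

lemma differentiable_qPoch {q : ℂ} (hq : ‖q‖ < 1) : Differentiable ℂ (qPoch q) := by
  intro a
  have hopen : IsOpen (Metric.ball (0 : ℂ) (‖a‖ + 1)) := Metric.isOpen_ball
  have h := Summable.hasProdLocallyUniformlyOn_nat_one_add
    (f := fun (n : ℕ) (x : ℂ) => -(x * q ^ n)) hopen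
    ((summable_geometric_of_lt_one (norm_nonneg _) hq).mul_left (‖a‖ + 1))
    (Eventually.of_forall fun n x hx => by
      simp only [norm_neg, norm_mul, norm_pow]
      gcongr
      exact (mem_ball_zero_iff.1 hx).le)
    (fun n => by fun_prop)
  have h2 : DifferentiableOn ℂ (fun x : ℂ => ∏' n : ℕ, (1 + -(x * q ^ n)))
      (Metric.ball (0 : ℂ) (‖a‖ + 1)) := by
    refine h.differentiableOn (Eventually.of_forall fun s => ?_) hopen
    fun_prop
  have h3 := h2.differentiableAt (hopen.mem_nhds (show a ∈ _ by simp))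
  simpa only [← sub_eq_add_neg] using! h3

lemma qTheta_eq {q : ℂ} (hq : ‖q‖ < 1) (a : ℂ) :
    qTheta q a = (1 - a) * (qPoch q (q * a) * qPoch q (q / a)) := by
  rw [qTheta, qPoch_eq hq a]; ring

lemma qTheta_inv {q a : ℂ} (hq : ‖q‖ < 1) (ha : a ≠ 0) :
    qTheta q a⁻¹ = -a⁻¹ * qTheta q a := by
  rw [qTheta_eq hq, qTheta_eq hq a, div_inv_eq_mul, ← div_eq_mul_inv]
  field_simp
  ring

lemma qTheta_mul {q a : ℂ} (hq : ‖q‖ < 1) (hq0 : q ≠ 0) (ha : a ≠ 0) :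
    qTheta q (q * a) = -a⁻¹ * qTheta q a := by
  rw [← qTheta_inv hq ha, qTheta, qTheta, div_inv_eq_mul, mul_comm]
  congr 2
  field_simp

lemma qTheta_one {q : ℂ} (hq : ‖q‖ < 1) : qTheta q 1 = 0 := by simp [qTheta_eq hq]

lemma norm_koebe_le {x : ℂ} {r : ℝ} (hr : r < 1) (hx : ‖x‖ ≤ r) :
    ‖koebe x‖ ≤ ‖x‖ / (1 - r) ^ 2 := by
  rw [koebe, norm_div, norm_pow]
  have h : 1 - r ≤ ‖1 - x‖ := by
    have := norm_sub_norm_le (1 : ℂ) x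
    rw [norm_one] at this
    linarith
  have : 0 < 1 - r := by linarith
  gcongr

lemma norm_mul_pow_le {q x : ℂ} {r : ℝ} (hq : ‖q‖ < 1) (hx : ‖x‖ ≤ r) (n : ℕ) :
    ‖x * q ^ n‖ ≤ r := by
  rw [norm_mul, norm_pow]
  have := pow_le_one₀ (n := n) (norm_nonneg q) hq.le
  nlinarith [norm_nonneg x]

lemma norm_koebe_mul_pow_le {q x : ℂ} {r : ℝ} (hq : ‖q‖ < 1) (hr : r < 1) (hx : ‖x‖ ≤ r)
    (n : ℕ) : ‖koebe (x * q ^ n)‖ ≤ r / (1 - r) ^ 2 * ‖q‖ ^ n := by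
  refine (norm_koebe_le hr (norm_mul_pow_le hq hx n)).trans ?_
  rw [norm_mul, norm_pow, div_mul_eq_mul_div]
  gcongr

lemma summable_halfSum {q x : ℂ} (hq : ‖q‖ < 1) (hx : ‖x‖ < 1) :
    Summable fun n : ℕ => koebe (x * q ^ n) :=
  Summable.of_norm_bounded ((summable_geometric_of_lt_one (norm_nonneg _) hq).mul_left _)
    (norm_koebe_mul_pow_le hq hx le_rfl)

lemma differentiableAt_halfSum {q x : ℂ} (hq : ‖q‖ < 1) (hx : ‖x‖ < 1) :
    DifferentiableAt ℂ (halfSum q) x := by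
  obtain ⟨r, hxr, hr⟩ := exists_between hx
  have hopen : IsOpen (Metric.ball (0 : ℂ) r) := Metric.isOpen_ball
  have h := Complex.differentiableOn_tsum_of_summable_norm
    (F := fun (n : ℕ) (x : ℂ) => koebe (x * q ^ n))
    ((summable_geometric_of_lt_one (norm_nonneg _) hq).mul_left (r / (1 - r) ^ 2))
    (fun n y hy => ?_) hopen
    (fun n y hy => norm_koebe_mul_pow_le hq hr (mem_ball_zero_iff.1 hy).le n)
  · exact h.differentiableAt (hopen.mem_nhds (mem_ball_zero_iff.2 hxr))
  · have h1 := norm_mul_pow_le hq (mem_ball_zero_iff.1 hy).le n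
    have h2 : 1 - y * q ^ n ≠ 0 := fun h0 => by
      rw [← sub_eq_zero.1 h0, norm_one] at h1
      linarith
    unfold koebe
    exact DifferentiableAt.differentiableWithinAt (by fun_prop (disch := simpa using h2))

lemma koebe_inv (x : ℂ) : koebe x⁻¹ = koebe x := by
  unfold koebe
  rcases eq_or_ne x 0 with rfl | hx
  · simp
  rcases eq_or_ne x 1 with rfl | h1
  · simp
  have h2 : 1 - x ≠ 0 := sub_ne_zero.2 h1.symm
  have h3 : 1 - x⁻¹ ≠ 0 := sub_ne_zero.2 (by simpa [eq_comm] using h1)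
  have h4 : x - 1 ≠ 0 := sub_ne_zero.2 h1
  rw [div_eq_div_iff (by positivity) (by positivity)]
  field_simp
  ring

lemma bilateralSum_mul {q : ℂ} (hq0 : q ≠ 0) (a : ℂ) :
    bilateralSum q (q * a) = bilateralSum q a := by
  have e : ∀ n : ℤ, koebe (q * a * q ^ n) = koebe (a * q ^ (Equiv.addRight (1 : ℤ) n)) :=
    fun n => by
      rw [Equiv.coe_addRight, zpow_add_one₀ hq0, mul_comm q a, mul_assoc, mul_comm q]
  rw [bilateralSum, tsum_congr e]
  exact (Equiv.addRight (1 : ℤ)).tsum_eq (fun n : ℤ => koebe (a * q ^ n))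

lemma bilateralSum_eq {q a : ℂ} (hq : ‖q‖ < 1) (h1 : ‖q * a‖ < 1) (h2 : ‖q / a‖ < 1) :
    bilateralSum q a = koebe a + (halfSum q (q * a) + halfSum q (q / a)) := by
  have e1 : ∀ n : ℕ, koebe (a * q ^ ((n + 1 : ℕ) : ℤ)) = koebe (q * a * q ^ n) := fun n => by
    rw [zpow_natCast, pow_succ]
    congr 1
    ring
  have e2 : ∀ n : ℕ, koebe (a * q ^ (-((n : ℤ) + 1))) = koebe (q / a * q ^ n) := fun n => by
    rw [← koebe_inv, mul_inv, ← zpow_neg, neg_neg, ← Nat.cast_succ, zpow_natCast, pow_succ]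
    congr 1
    ring
  have s1 := (summable_halfSum hq h1).congr (fun n => (e1 n).symm)
  have s2 := (summable_halfSum hq h2).congr (fun n => (e2 n).symm)
  have s1' : Summable fun n : ℕ => koebe (a * q ^ (n : ℤ)) :=
    (summable_nat_add_iff (f := fun n : ℕ => koebe (a * q ^ (n : ℤ))) 1).1 s1
  have h3 := tsum_of_nat_of_neg_add_one (f := fun n : ℤ => koebe (a * q ^ n)) s1' s2
  rw [bilateralSum, h3, s1'.tsum_eq_zero_add, tsum_congr e1, tsum_congr e2, halfSum, halfSum,
    Nat.cast_zero, zpow_zero, mul_one, add_assoc]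

lemma eq_of_mul_periodic {q : ℂ} (hq0 : q ≠ 0) (hq : ‖q‖ < 1) {h : ℂ → ℂ}
    (hper : ∀ a ≠ 0, h (q * a) = h a)
    (hd : ∀ a, ‖q‖ < ‖a‖ → ‖a‖ ≤ 1 → DifferentiableAt ℂ h a) {a b : ℂ} (ha : a ≠ 0)
    (hb : b ≠ 0) : h a = h b := by
  have hqn : 0 < ‖q‖ := norm_pos_iff.2 hq0
  have hz : ∀ (n : ℤ) (a : ℂ), a ≠ 0 → h (q ^ n * a) = h a := by
    intro n
    induction n with
    | zero => simp
    | succ n ih =>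
      intro a ha
      rw [zpow_add_one₀ hq0, mul_assoc, ih _ (mul_ne_zero hq0 ha), hper a ha]
    | pred n ih =>
      intro a ha
      rw [← ih a ha, ← hper (q ^ (-(n : ℤ) - 1) * a) (mul_ne_zero (zpow_ne_zero _ hq0) ha),
        ← mul_assoc, ← zpow_one_add₀ hq0]
      ring_nf
  have hrep : ∀ a : ℂ, a ≠ 0 → ∃ n : ℤ, ‖q‖ < ‖q ^ n * a‖ ∧ ‖q ^ n * a‖ ≤ 1 := by
    intro a ha
    obtain ⟨n, hn1, hn2⟩ := exists_mem_Ioc_zpow (norm_pos_iff.2 ha) ((one_lt_inv₀ hqn).2 hq)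
    refine ⟨n + 1, ?_, ?_⟩
    · rw [norm_mul, norm_zpow, zpow_add_one₀ hqn.ne']
      rw [inv_zpow, inv_lt_iff_one_lt_mul₀ (by positivity)] at hn1
      nlinarith
    · rw [norm_mul, norm_zpow]
      rwa [inv_zpow, le_inv_comm₀ (norm_pos_iff.2 ha) (by positivity),
        le_inv_comm₀ (by positivity) (norm_pos_iff.2 ha), ← one_div,
        le_div_iff₀ (by positivity), mul_comm] at hn2
  have hd' : ∀ a : ℂ, a ≠ 0 → DifferentiableAt ℂ h a := by
    intro a ha
    obtain ⟨n, hn1, hn2⟩ := hrep a ha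
    have h1 : DifferentiableAt ℂ (fun x => h (q ^ n * x)) a :=
      DifferentiableAt.comp (g := h) a (hd _ hn1 hn2) (by fun_prop)
    refine h1.congr_of_eventuallyEq ?_
    filter_upwards [isOpen_ne.mem_nhds ha] with x hx using (hz n x hx).symm
  have hdiff : Differentiable ℂ (fun z => h (Complex.exp z)) := fun z =>
    DifferentiableAt.comp (g := h) z (hd' _ (Complex.exp_ne_zero z)) (by fun_prop)
  have hcomp : IsCompact (Metric.closedBall (0 : ℂ) 1 ∩ {x : ℂ | ‖q‖ ≤ ‖x‖}) :=
    (isCompact_closedBall 0 1).inter_right (isClosed_le continuous_const continuous_norm)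
  have hbd : Bornology.IsBounded (Set.range fun z => h (Complex.exp z)) := by
    refine (hcomp.image_of_continuousOn (f := h) fun x hx => ?_).isBounded.subset ?_
    · exact (hd' x (norm_pos_iff.1 (hqn.trans_le hx.2))).continuousAt.continuousWithinAt
    · rintro _ ⟨z, rfl⟩
      obtain ⟨n, hn1, hn2⟩ := hrep _ (Complex.exp_ne_zero z)
      exact ⟨_, ⟨mem_closedBall_zero_iff.2 hn2, hn1.le⟩, hz n _ (Complex.exp_ne_zero z)⟩
  have := hdiff.apply_eq_apply_of_bounded hbd (Complex.log a) (Complex.log b)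
  simpa [Complex.exp_log ha, Complex.exp_log hb] using this

lemma qPoch_mul_ne_zero {q a : ℂ} (hq : ‖q‖ < 1) (h1 : ‖q * a‖ < 1) (h2 : ‖q / a‖ < 1) :
    qPoch q (q * a) * qPoch q (q / a) ≠ 0 :=
  mul_ne_zero (qPoch_ne_zero hq h1) (qPoch_ne_zero hq h2)

lemma qTheta_ne_zero {q a : ℂ} (hq : ‖q‖ < 1) (ha : ‖a‖ = 1) (ha1 : a ≠ 1) :
    qTheta q a ≠ 0 := by
  rw [qTheta_eq hq]
  exact mul_ne_zero (sub_ne_zero.2 ha1.symm)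
    (qPoch_mul_ne_zero hq (by simpa [ha] using hq) (by simpa [ha] using hq))

lemma differentiableAt_qTheta {q a : ℂ} (hq : ‖q‖ < 1) (ha : a ≠ 0) :
    DifferentiableAt ℂ (qTheta q) a := by
  have h := differentiable_qPoch hq
  unfold qTheta
  fun_prop (disch := assumption)

lemma bilateralSum_sub_bilateralSum {q a b : ℂ} (hq0 : q ≠ 0) (hq : ‖q‖ < 1) (ha : ‖a‖ = 1)
    (ha1 : a ≠ 1) (hb : ‖b‖ = 1) (hb1 : b ≠ 1) :
    bilateralSum q a - bilateralSum q b = qPoch q q ^ 4 / (qTheta q b * qTheta q b⁻¹) *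
      (qTheta q (a * b) * qTheta q (a / b)) / qTheta q a ^ 2 := by
  have ha0 : a ≠ 0 := norm_pos_iff.1 (by simp [ha])
  have hb0 : b ≠ 0 := norm_pos_iff.1 (by simp [hb])
  have hqn : 0 < ‖q‖ := norm_pos_iff.2 hq0
  set C := qPoch q q ^ 4 / (qTheta q b * qTheta q b⁻¹) with hC
  set H : ℂ → ℂ := fun x =>
    bilateralSum q x - C * (qTheta q (x * b) * qTheta q (x / b)) / qTheta q x ^ 2 with hH
  set t : ℂ → ℂ := fun x => qPoch q (q * x) * qPoch q (q / x) with ht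
  set K : ℂ → ℂ := fun x => x + (1 - x) ^ 2 * (halfSum q (q * x) + halfSum q (q / x))
    - C * (qTheta q (x * b) * qTheta q (x / b)) / t x ^ 2 with hK
  set U : Set ℂ := {x | x ≠ 0 ∧ ‖q * x‖ < 1 ∧ ‖q / x‖ < 1} with hU
  have htU : ∀ x ∈ U, t x ≠ 0 := fun x hx => qPoch_mul_ne_zero hq hx.2.1 hx.2.2
  have hUn : ∀ x : ℂ, ‖q‖ < ‖x‖ → ‖x‖ ≤ 1 → x ∈ U := fun x h1 h2 => by
    have hx : 0 < ‖x‖ := hqn.trans h1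
    refine ⟨norm_pos_iff.1 hx, ?_, ?_⟩
    · rw [norm_mul]; nlinarith
    · rw [norm_div, div_lt_one hx]; exact h1
  have hU1 : (1 : ℂ) ∈ U := hUn 1 (by simpa using hq) (by simp)
  have hKd : ∀ x ∈ U, DifferentiableAt ℂ K x := by
    rintro x ⟨hx0, hx1, hx2⟩
    have d1 : DifferentiableAt ℂ (fun x => halfSum q (q * x)) x :=
      DifferentiableAt.comp (g := halfSum q) x (differentiableAt_halfSum hq hx1) (by fun_prop)
    have d2 : DifferentiableAt ℂ (fun x => halfSum q (q / x)) x :=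
      DifferentiableAt.comp (g := halfSum q) x (differentiableAt_halfSum hq hx2)
        (by fun_prop (disch := assumption))
    have d3 : DifferentiableAt ℂ (fun x => qTheta q (x * b)) x :=
      DifferentiableAt.comp (g := qTheta q) x
        (differentiableAt_qTheta hq (mul_ne_zero hx0 hb0)) (by fun_prop)
    have d4 : DifferentiableAt ℂ (fun x => qTheta q (x / b)) x :=
      DifferentiableAt.comp (g := qTheta q) x
        (differentiableAt_qTheta hq (div_ne_zero hx0 hb0)) (by fun_prop)
    have d5 : DifferentiableAt ℂ t x := by
      have := differentiable_qPoch hq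
      fun_prop (disch := assumption)
    have h5 : t x ^ 2 ≠ 0 := pow_ne_zero 2 (htU x ⟨hx0, hx1, hx2⟩)
    fun_prop (disch := assumption)
  have hUo : IsOpen U := by
    have : U = {x : ℂ | x ≠ 0} ∩ ({x : ℂ | ‖q * x‖ < 1} ∩ {x : ℂ | ‖q‖ < ‖x‖}) := by
      ext x
      simp only [hU, Set.mem_ofPred_eq, Set.mem_inter_iff]
      refine and_congr_right fun hx => and_congr_right fun _ => ?_
      rw [norm_div, div_lt_one (norm_pos_iff.2 hx)]
    rw [this]
    exact isOpen_ne.inter ((isOpen_lt (by fun_prop) continuous_const).inter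
      (isOpen_lt continuous_const continuous_norm))
  have hKinv : ∀ x ∈ U, x ^ 2 * K x⁻¹ = K x := by
    rintro x hx
    have hx0 : x ≠ 0 := hx.1
    have e1 : qTheta q (x⁻¹ * b) = -(b / x) * qTheta q (x / b) := by
      rw [← inv_div x b, ← qTheta_inv hq (div_ne_zero hx0 hb0), inv_div, div_eq_inv_mul]
    have e2 : qTheta q (x⁻¹ / b) = -(x * b)⁻¹ * qTheta q (x * b) := by
      rw [← qTheta_inv hq (mul_ne_zero hx0 hb0), mul_inv, div_eq_mul_inv]
    have e3 : t x⁻¹ = t x := by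
      simp only [ht]
      rw [div_inv_eq_mul, ← div_eq_mul_inv, mul_comm]
    have h5 := htU x hx
    simp only [hK, e1, e2, e3]
    rw [div_inv_eq_mul, ← div_eq_mul_inv]
    field_simp
    ring
  have hK1 : K 1 = 0 := by
    have n1 := qTheta_ne_zero hq hb hb1
    have n2 : qTheta q b⁻¹ ≠ 0 := qTheta_ne_zero hq (by simp [hb]) (by simpa using hb1)
    have n3 : qPoch q q ≠ 0 := qPoch_ne_zero hq hq
    simp only [hK, ht, hC, one_mul, one_div, mul_one, div_one, sub_self]
    generalize qTheta q b⁻¹ = y at n2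
    field_simp
    ring
  have hK1' : deriv K 1 = 0 := by
    have d := (hKd 1 hU1).hasDerivAt
    have d1 : HasDerivAt (fun x : ℂ => x ^ 2 * K x⁻¹) (-deriv K 1) 1 := by
      have d2 : HasDerivAt (fun x : ℂ => K x⁻¹) (deriv K 1 * -1) 1 := by
        have := HasDerivAt.comp (h₂ := K) (h := fun x : ℂ => x⁻¹) (1 : ℂ)
          (h₂' := deriv K 1) (by simpa using d) (hasDerivAt_inv one_ne_zero)
        simpa using! this
      have := (hasDerivAt_pow 2 (1 : ℂ)).mul d2
      simpa [hK1] using! this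
    have d3 : HasDerivAt (fun x : ℂ => x ^ 2 * K x⁻¹) (deriv K 1) 1 :=
      d.congr_of_eventuallyEq (by
        filter_upwards [hUo.mem_nhds hU1] with x hx using hKinv x hx)
    have := d1.unique d3
    linear_combination (-1 / 2 : ℂ) * this
  set K₂ : ℂ → ℂ := dslope (dslope K 1) 1 with hK₂
  have hK₂d : ∀ x ∈ U, DifferentiableAt ℂ K₂ x := by
    have hn := hUo.mem_nhds hU1
    have : DifferentiableOn ℂ K₂ U := by
      rw [hK₂, Complex.differentiableOn_dslope hn, Complex.differentiableOn_dslope hn]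
      exact fun x hx => (hKd x hx).differentiableWithinAt
    exact fun x hx => this.differentiableAt (hUo.mem_nhds hx)
  have hHK : ∀ x ∈ U, x ≠ 1 → H x = K₂ x := by
    intro x hx hx1
    have h5 := htU x hx
    have h6 : x - 1 ≠ 0 := sub_ne_zero.2 hx1
    have h7 : 1 - x ≠ 0 := sub_ne_zero.2 hx1.symm
    rw [hK₂, dslope_of_ne _ hx1, slope_def_field, dslope_same, hK1', dslope_of_ne _ hx1,
      slope_def_field, hK1]
    simp only [hH, hK]
    rw [bilateralSum_eq hq hx.2.1 hx.2.2, qTheta_eq hq x, koebe]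
    change _ - _ / ((1 - x) * t x) ^ 2 = _
    have h8 : (x - 1) = -(1 - x) := by ring
    rw [h8]
    field_simp
    ring
  classical
  set G : ℂ → ℂ := fun x => if ∃ n : ℤ, x = q ^ n then K₂ 1 else H x with hG
  have hGK : ∀ x ∈ U, G x = K₂ x := by
    intro x hx
    by_cases hx1 : x = 1
    · subst hx1
      exact if_pos ⟨0, by simp⟩
    · have : ¬ ∃ n : ℤ, x = q ^ n := by
        rintro ⟨n, rfl⟩
        have i1 := hx.2.1
        have i2 := hx.2.2
        rw [← zpow_one_add₀ hq0, norm_zpow, zpow_lt_one_iff_right_of_lt_one₀ hqn hq] at i1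
        rw [div_eq_mul_inv, ← zpow_neg, ← zpow_one_add₀ hq0, norm_zpow,
          zpow_lt_one_iff_right_of_lt_one₀ hqn hq] at i2
        obtain rfl : n = 0 := by omega
        simp at hx1
      rw [hG]
      simp only [if_neg this]
      exact hHK x hx hx1
  have hHper : ∀ x ≠ 0, H (q * x) = H x := by
    intro x hx
    simp only [hH]
    rw [bilateralSum_mul hq0, mul_assoc q, mul_div_assoc q, qTheta_mul hq hq0 hx,
      qTheta_mul hq hq0 (mul_ne_zero hx hb0), qTheta_mul hq hq0 (div_ne_zero hx hb0)]
    congr 1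
    by_cases h0 : qTheta q x = 0
    · simp [h0]
    · field_simp
  have hGper : ∀ x ≠ 0, G (q * x) = G x := by
    intro x hx
    have : (∃ n : ℤ, q * x = q ^ n) ↔ ∃ n : ℤ, x = q ^ n := by
      constructor
      · rintro ⟨n, hn⟩
        refine ⟨n - 1, ?_⟩
        rw [zpow_sub_one₀ hq0, ← hn]
        field_simp
      · rintro ⟨n, rfl⟩
        exact ⟨1 + n, (zpow_one_add₀ hq0 n).symm⟩
    simp only [hG, this, hHper x hx]
  have hGH : ∀ x : ℂ, ‖x‖ = 1 → x ≠ 1 → G x = H x := by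
    intro x hx hx1
    have hxU : x ∈ U := hUn x (by rwa [hx]) hx.le
    rw [hGK x hxU, hHK x hxU hx1]
  have key := eq_of_mul_periodic hq0 hq hGper (fun x h1 h2 => by
    refine (hK₂d x (hUn x h1 h2)).congr_of_eventuallyEq ?_
    filter_upwards [hUo.mem_nhds (hUn x h1 h2)] with y hy using hGK y hy) ha0 hb0
  rw [hGH a ha ha1, hGH b hb hb1] at key
  simp only [hH, div_self hb0, qTheta_one hq, mul_zero, zero_div, sub_zero] at key
  linear_combination key

lemma hasSum_halfSum {q x : ℂ} (hq : ‖q‖ < 1) (hx : ‖x‖ < 1) :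
    HasSum (fun m : ℕ => (m : ℂ) * x ^ m / (1 - q ^ m)) (halfSum q x) := by
  obtain ⟨F, hFdef⟩ : ∃ F : ℕ × ℕ → ℂ, F = fun p => (p.1 : ℂ) * (x * q ^ p.2) ^ p.1 := ⟨_, rfl⟩
  have hF : Summable F := by
    have h1 : Summable fun m : ℕ => (m : ℝ) * ‖x‖ ^ m :=
      (hasSum_coe_mul_geometric_of_norm_lt_one (r := ‖x‖) (by simpa using hx)).summable
    have h2 : Summable fun n : ℕ => ‖q‖ ^ n := summable_geometric_of_lt_one (norm_nonneg _) hq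
    have h3 : Summable fun p : ℕ × ℕ => ((p.1 : ℝ) * ‖x‖ ^ p.1) * ‖q‖ ^ p.2 :=
      Summable.mul_of_nonneg (f := fun m : ℕ => (m : ℝ) * ‖x‖ ^ m) (g := fun n : ℕ => ‖q‖ ^ n)
        h1 h2 (fun m => by positivity) (fun n => by positivity)
    refine Summable.of_norm_bounded h3 fun p => ?_
    obtain ⟨m, n⟩ := p
    rcases Nat.eq_zero_or_pos m with rfl | hm
    · simp [hFdef]
    · simp only [hFdef, norm_mul, norm_pow, Complex.norm_natCast, mul_pow]
      rw [mul_assoc, ← pow_mul]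
      refine mul_le_mul_of_nonneg_left (mul_le_mul_of_nonneg_left ?_ (by positivity))
        (Nat.cast_nonneg m)
      exact pow_le_pow_of_le_one (norm_nonneg _) hq.le (Nat.le_mul_of_pos_right n hm)
  have hrow : ∀ m : ℕ, HasSum (fun n : ℕ => F (m, n))
      ((m : ℂ) * x ^ m / (1 - q ^ m)) := by
    intro m
    rcases Nat.eq_zero_or_pos m with rfl | hm
    · simp [hFdef, hasSum_zero]
    · have h := (hasSum_geometric_of_norm_lt_one (ξ := q ^ m)
        (by rw [norm_pow]; exact pow_lt_one₀ (norm_nonneg _) hq hm.ne')).mul_left ((m : ℂ) * x ^ m)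
      rw [← div_eq_mul_inv] at h
      refine h.congr_fun fun n => ?_
      simp only [hFdef]
      rw [mul_pow, pow_right_comm, mul_assoc]
  have hcol : ∀ n : ℕ, HasSum (fun m : ℕ => F (m, n)) (koebe (x * q ^ n)) := by
    intro n
    have h := hasSum_coe_mul_geometric_of_norm_lt_one (r := x * q ^ n)
      ((norm_mul_pow_le hq le_rfl n).trans_lt hx)
    rw [hFdef]
    exact h
  have hS := HasSum.prod_fiberwise (f := F)
    (g := fun m : ℕ => (m : ℂ) * x ^ m / (1 - q ^ m)) hF.hasSum hrow
  have hS' := HasSum.prod_fiberwise (f := F ∘ Equiv.prodComm ℕ ℕ)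
    (g := fun n : ℕ => koebe (x * q ^ n)) (((Equiv.prodComm ℕ ℕ).hasSum_iff).2 hF.hasSum) hcol
  have h4 : halfSum q x = ∑' p, F p := hS'.tsum_eq
  exact h4 ▸ hS

lemma hasSum_halfSum_mul {q a : ℂ} (hq : ‖q‖ < 1) (ha : ‖a‖ = 1) :
    HasSum (fun n : ℕ => ((n : ℂ) + 1) * q ^ (n + 1) / (1 - q ^ (n + 1)) * a ^ (n + 1))
      (halfSum q (q * a)) := by
  have h := hasSum_halfSum hq (x := q * a) (by simpa [ha] using hq)
  rw [← hasSum_nat_add_iff' 1] at h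
  simp only [Finset.range_one, Finset.sum_singleton, Nat.cast_zero, zero_mul, zero_div, sub_zero]
    at h
  refine h.congr_fun fun n => ?_
  push_cast
  rw [mul_pow]
  ring

lemma hasSum_bilateralSum {q a : ℂ} (hq : ‖q‖ < 1) (ha : ‖a‖ = 1) :
    HasSum (fun n : ℕ => ((n : ℂ) + 1) * q ^ (n + 1) / (1 - q ^ (n + 1)) *
      (a ^ (n + 1) + a⁻¹ ^ (n + 1))) (bilateralSum q a - koebe a) := by
  rw [bilateralSum_eq hq (by simpa [ha] using hq) (by simpa [ha] using hq), add_sub_cancel_left]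
  simp only [mul_add]
  exact (hasSum_halfSum_mul hq ha).add (hasSum_halfSum_mul hq (by simp [ha]))

lemma qTheta_mul_qTheta_sq {q ζ : ℂ} (hq : ‖q‖ < 1)
    (hζ : 1 + ζ + ζ ^ 2 + ζ ^ 3 + ζ ^ 4 = 0) :
    qTheta q ζ * qTheta q (ζ ^ 2) * qPoch q q =
      (1 - ζ) * (1 - ζ ^ 2) * qPoch (q ^ 5) (q ^ 5) := by
  have h5 : ζ ^ 5 = 1 := by linear_combination (ζ - 1) * hζ
  have hζ0 : ζ ≠ 0 := by rintro rfl; simp at h5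
  have e1 : q / ζ = q * ζ ^ 4 := by
    rw [div_eq_iff hζ0]; linear_combination (-q) * h5
  have e2 : q / ζ ^ 2 = q * ζ ^ 3 := by
    rw [div_eq_iff (pow_ne_zero 2 hζ0)]; linear_combination (-q) * h5
  have m := fun a : ℂ => multipliable_qPoch hq a
  have key : qPoch q q * qPoch q (q * ζ) * qPoch q (q * ζ ^ 2) * qPoch q (q * ζ ^ 3) *
      qPoch q (q * ζ ^ 4) = qPoch (q ^ 5) (q ^ 5) := by
    unfold qPoch
    rw [← (m _).tprod_mul (m _), ← ((m _).mul (m _)).tprod_mul (m _),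
      ← (((m _).mul (m _)).mul (m _)).tprod_mul (m _),
      ← ((((m _).mul (m _)).mul (m _)).mul (m _)).tprod_mul (m _)]
    refine tprod_congr fun n => ?_
    have : q ^ 5 * (q ^ 5) ^ n = (q * q ^ n) ^ 5 := by rw [mul_pow, pow_right_comm]
    rw [this]
    generalize hx : q * q ^ n = x
    have h : ∀ c : ℂ, q * c * q ^ n = x * c := fun c => by rw [← hx]; ring
    simp only [h]
    linear_combination (-x + (ζ + ζ ^ 3) * x ^ 2 - (ζ ^ 3 + ζ ^ 5) * x ^ 3 + ζ ^ 6 * x ^ 4 +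
      (1 - ζ) * (1 + ζ ^ 5) * x ^ 5) * hζ
  rw [qTheta_eq hq, qTheta_eq hq, e1, e2, ← key]
  ring

lemma pow_add_inv_pow_sub_eq {ζ : ℂ} (h5 : ζ ^ 5 = 1) (m : ℕ) :
    ζ ^ m + ζ⁻¹ ^ m - ((ζ ^ 2) ^ m + (ζ ^ 2)⁻¹ ^ m) = (ζ + ζ ^ 4 - ζ ^ 2 - ζ ^ 3) *
      ((if m % 5 = 1 ∨ m % 5 = 4 then 1 else 0) - (if m % 5 = 2 ∨ m % 5 = 3 then 1 else 0)) := by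
  have hζ0 : ζ ≠ 0 := by rintro rfl; simp at h5
  have e1 : ζ⁻¹ = ζ ^ 4 := inv_eq_of_mul_eq_one_right (by linear_combination h5)
  have e2 : (ζ ^ 2)⁻¹ = ζ ^ 3 := inv_eq_of_mul_eq_one_right (by linear_combination h5)
  have hred : ∀ k : ℕ, ζ ^ k = ζ ^ (k % 5) := fun k => pow_eq_pow_mod k h5
  rw [e1, e2, ← pow_mul, ← pow_mul, ← pow_mul, hred m, hred (4 * m), hred (2 * m), hred (3 * m)]
  have hm : m % 5 < 5 := Nat.mod_lt _ (by norm_num)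
  rw [Nat.mul_mod 4, Nat.mul_mod 2, Nat.mul_mod 3]
  interval_cases m % 5 <;> norm_num <;> ring

/-- The `k = 2` case of the determinant identity is Ramanujan's modulus 5 identity:
`A₂(q) - A₁(q) = (-1/5)(q;q)_∞⁵/(q⁵;q⁵)_∞`, where
`A₁ = 11/60 + ∑_{n≡±2 (5)} nqⁿ/(1-qⁿ)` and `A₂ = -1/60 + ∑_{n≡±1 (5)} nqⁿ/(1-qⁿ)`. -/
theorem mod5_determinant_case (A₁ A₂ : ℂ → ℂ)
    (hA₁ : A₁ = fun q : ℂ => 11 / 60 + ∑' n : ℕ,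
      if (n + 1) % 5 = 2 ∨ (n + 1) % 5 = 3 then
        ((n : ℂ) + 1) * q ^ (n + 1) / (1 - q ^ (n + 1)) else 0)
    (hA₂ : A₂ = fun q : ℂ => -(1 / 60) + ∑' n : ℕ,
      if (n + 1) % 5 = 1 ∨ (n + 1) % 5 = 4 then
        ((n : ℂ) + 1) * q ^ (n + 1) / (1 - q ^ (n + 1)) else 0)
    (q : ℂ) (hq : ‖q‖ < 1) :
    A₂ q - A₁ q
      = -(1 / 5) * (∏' n : ℕ, (1 - q ^ (n + 1))) ^ 5 / ∏' n : ℕ, (1 - (q ^ 5) ^ (n + 1)) := by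
  have hP : ∀ x : ℂ, ∏' n : ℕ, (1 - x ^ (n + 1)) = qPoch x x := fun x =>
    tprod_congr fun n => by rw [pow_succ']
  rw [hA₁, hA₂, hP, hP]
  rcases eq_or_ne q 0 with rfl | hq0
  · norm_num [qPoch]
  have hprim := Complex.isPrimitiveRoot_exp 5 (by norm_num)
  obtain ⟨ζ, hζ⟩ : ∃ ζ : ℂ, IsPrimitiveRoot ζ 5 := ⟨_, hprim⟩
  have h5 : ζ ^ 5 = 1 := hζ.pow_eq_one
  have hζ0 : ζ ≠ 0 := hζ.ne_zero (by norm_num)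
  have hΦ : 1 + ζ + ζ ^ 2 + ζ ^ 3 + ζ ^ 4 = 0 := by
    have := hζ.geom_sum_eq_zero (by norm_num)
    simpa [Finset.sum_range_succ] using this
  have hn : ‖ζ‖ = 1 := hζ.norm'_eq_one (by norm_num)
  have hn2 : ‖ζ ^ 2‖ = 1 := by rw [norm_pow, hn, one_pow]
  have h1 : ζ ≠ 1 := hζ.ne_one (by norm_num)
  have h2 : ζ ^ 2 ≠ 1 := hζ.pow_ne_one_of_pos_of_lt (by norm_num) (by norm_num)
  have n1 : 1 - ζ ≠ 0 := sub_ne_zero.2 h1.symm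
  have n2 : 1 - ζ ^ 2 ≠ 0 := sub_ne_zero.2 h2.symm
  set u : ℕ → ℂ := fun n => ((n : ℂ) + 1) * q ^ (n + 1) / (1 - q ^ (n + 1)) with hu
  have hus : Summable u := by
    simpa using (hasSum_halfSum_mul hq (a := 1) (by simp)).summable
  have hif : ∀ p : ℕ → Prop, [DecidablePred p] → Summable fun n => if p n then u n else 0 := by
    intro p _
    refine Summable.of_norm_bounded hus.norm fun n => ?_
    split_ifs <;> simp
  set X := (∑' n : ℕ, if (n + 1) % 5 = 1 ∨ (n + 1) % 5 = 4 then u n else 0) -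
    ∑' n : ℕ, if (n + 1) % 5 = 2 ∨ (n + 1) % 5 = 3 then u n else 0 with hX
  have hXs := (hif (fun n => (n + 1) % 5 = 1 ∨ (n + 1) % 5 = 4)).hasSum.sub
    (hif (fun n => (n + 1) % 5 = 2 ∨ (n + 1) % 5 = 3)).hasSum
  have hlam := (hasSum_bilateralSum hq hn).sub (hasSum_bilateralSum hq hn2)
  have hXeq : bilateralSum q ζ - koebe ζ - (bilateralSum q (ζ ^ 2) - koebe (ζ ^ 2)) =
      (ζ + ζ ^ 4 - ζ ^ 2 - ζ ^ 3) * X := by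
    refine hlam.unique ((hXs.mul_left _).congr_fun fun n => ?_)
    rw [← mul_sub, pow_add_inv_pow_sub_eq h5]
    simp only [hu]
    split_ifs <;> ring
  have hdiff := bilateralSum_sub_bilateralSum hq0 hq hn h1 hn2 h2
  have e3 : ζ * ζ ^ 2 = (ζ ^ 2)⁻¹ :=
    (inv_eq_of_mul_eq_one_right (by linear_combination h5)).symm
  have e4 : ζ / ζ ^ 2 = ζ⁻¹ := by field_simp
  have t1 := qTheta_ne_zero hq hn h1
  have t2 := qTheta_ne_zero hq hn2 h2
  have t3 : qTheta q (ζ ^ 2)⁻¹ ≠ 0 :=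
    qTheta_ne_zero hq (by rw [norm_inv, hn2, inv_one]) (by simpa using h2)
  have hq5 : ‖q ^ 5‖ < 1 := by rw [norm_pow]; exact pow_lt_one₀ (norm_nonneg _) hq (by norm_num)
  have p5 := qPoch_ne_zero hq5 hq5
  have hprod := qTheta_mul_qTheta_sq hq hΦ
  have hdiff' : (bilateralSum q ζ - bilateralSum q (ζ ^ 2)) * (ζ * (1 - ζ) * (1 - ζ ^ 2)) =
      -(qPoch q q ^ 5 / qPoch (q ^ 5) (q ^ 5)) := by
    have hp : qPoch (q ^ 5) (q ^ 5) =
        qTheta q ζ * qTheta q (ζ ^ 2) * qPoch q q / ((1 - ζ) * (1 - ζ ^ 2)) := by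
      rw [hprod]; field_simp
    rw [hdiff, e3, e4, qTheta_inv hq hζ0, hp]
    generalize qTheta q (ζ ^ 2)⁻¹ = y at t3
    have p1 := qPoch_ne_zero hq hq
    field_simp
  have hk : (koebe ζ - koebe (ζ ^ 2)) * (ζ * (1 - ζ) * (1 - ζ ^ 2)) = -1 := by
    have n3 : 1 + ζ ≠ 0 := fun h => n2 (by linear_combination (1 - ζ) * h)
    have e5 : 1 - ζ ^ 2 = (1 - ζ) * (1 + ζ) := by ring
    unfold koebe
    rw [e5]
    field_simp
    linear_combination hΦ
  have hs : (ζ + ζ ^ 4 - ζ ^ 2 - ζ ^ 3) * (ζ * (1 - ζ) * (1 - ζ ^ 2)) = 5 := by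
    linear_combination (-5 + 5 * ζ + ζ ^ 2 - 3 * ζ ^ 3 + ζ ^ 4) * hΦ
  rw [mul_div_assoc]
  linear_combination (1 / 5 : ℂ) * hdiff' - (1 / 5 : ℂ) * (ζ * (1 - ζ) * (1 - ζ ^ 2)) * hXeq -
    (1 / 5 : ℂ) * hk - (1 / 5 : ℂ) * X * hs
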